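/- Fix a positive integer N₀ divisible by 8, an integer a with a ≡ 1 (mod 4) and gcd(a, N₀) = 1, a sign κ ∈ {1, −1}, a real number ε with 0 < ε < 1/2, and a smooth function Φ : ℝ → ℝ with Φ ≥ 0, compactly supported in [1/2, 5/2]. Then there exists a constant C > 0 (depending only on N₀, ε, and Φ) with the following property. For every real X ≥ 2 and all positive integers n and v with gcd(nv, N₀) = 1, v squarefree, gcd(n, v) = 1, v·√n ≤ X^{1/2 − ε}, and n NOT a perfect square, one has | ∑_{d} (d|n)·Φ(κd/X) | ≤ C·X^{1/2 + ε}·√n, where the sum runs over all squarefree integers d with κd > 0, d ≡ a (mod N₀), and v | d. -/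

import Mathlib

open scoped Classical

/-!
The condition `κ d > 0` is removed by substituting `d = κ m`, and squarefreeness of `m` is detected
by `∑_{α² ∣ m} μ(α)`, where only `α ≤ √(R X)` matter if `Φ` vanishes beyond `R`. For fixed `α` the
integers `m` that remain are the multiples `m = M l` of `M = lcm(v, α²)` with `l` in an arithmetic
progression of modulus coprime to `n`. Along it the partial sums of the Jacobi symbol are at most
`√n (1 + log n)` by the Pólya–Vinogradov inequality, and partial summation against `Φ` costs only
the total variation of `Φ`. Altogether the sum is `O(√X √n (1 + log n))`, which suffices when
`n ≤ X`. When `n > X` the trivial bound `O(X)` suffices.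

Pólya–Vinogradov applies because `n` is not a square: write `n = r² k` with `k ≠ 1` squarefree, so
that the Jacobi symbol modulo `k` is a primitive character, and remove the condition `(m, r) = 1` by
Möbius inversion over the divisors of `r`.
-/

open Finset
open scoped NumberTheorySymbols ArithmeticFunction.Moebius

lemma sum_Ico_int_eq_sum_range {M : Type*} [AddCommMonoid M] (f : ℤ → M) (a b : ℤ) :
    ∑ m ∈ Ico a b, f m = ∑ j ∈ range (b - a).toNat, f (a + j) := by
  simp [Ico, LocallyFiniteOrder.finsetIco, sum_map]

section PolyaVinogradov

lemma two_mul_mul_one_sub_le_sin_pi_mul {x : ℝ} (h0 : 0 ≤ x) (h1 : x ≤ 1) :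
    2 * x * (1 - x) ≤ Real.sin (Real.pi * x) := by
  wlog hx : x ≤ 1 / 2 generalizing x
  · have h := this (x := 1 - x) (by linarith) (by linarith) (by linarith)
    rw [mul_sub Real.pi, mul_one, Real.sin_pi_sub] at h
    linarith
  have hsin := Real.mul_le_sin (x := Real.pi * x) (by positivity) (by nlinarith [Real.pi_pos])
  rw [← mul_assoc, div_mul_cancel₀ _ Real.pi_ne_zero] at hsin
  nlinarith

lemma norm_geom_sum_le {𝕜 : Type*} [NormedField 𝕜] {z : 𝕜} (hz : ‖z‖ = 1) (hz1 : z ≠ 1) (K : ℕ) :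
    ‖∑ j ∈ range K, z ^ j‖ ≤ 2 / ‖z - 1‖ := by
  rw [le_div_iff₀ (norm_pos_iff.2 (sub_ne_zero.2 hz1)), ← norm_mul, geom_sum_mul]
  calc ‖z ^ K - 1‖ ≤ ‖z ^ K‖ + ‖(1 : 𝕜)‖ := norm_sub_le _ _
    _ = 2 := by rw [norm_pow, hz, one_pow, norm_one]; norm_num

variable {k : ℕ} [NeZero k]

lemma norm_stdAddChar (t : ZMod k) : ‖ZMod.stdAddChar t‖ = 1 := by
  rw [ZMod.stdAddChar_apply, Circle.norm_coe]

lemma norm_stdAddChar_sub_one (t : ZMod k) :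
    ‖ZMod.stdAddChar t - 1‖ = 2 * Real.sin (Real.pi * (t.val / k)) := by
  have hlt : (t.val / k : ℝ) ≤ 1 := div_le_one_of_le₀ (mod_cast t.val_le) (by positivity)
  have hsin : 0 ≤ Real.sin (Real.pi * (t.val / k)) :=
    Real.sin_nonneg_of_nonneg_of_le_pi (by positivity) (by nlinarith [Real.pi_pos])
  have hexp : ZMod.stdAddChar t = Complex.exp (Complex.I * (2 * Real.pi * (t.val / k) : ℝ)) := by
    rw [ZMod.stdAddChar_apply, ZMod.toCircle_apply]
    push_cast
    ring_nf
  rw [hexp, Complex.norm_exp_I_mul_ofReal_sub_one, mul_assoc, mul_div_cancel_left₀ _ two_ne_zero,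
    Real.norm_of_nonneg (by positivity)]

lemma norm_sum_Ico_stdAddChar_le {t : ZMod k} (ht : t ≠ 0) (a b : ℤ) :
    ‖∑ m ∈ Ico a b, ZMod.stdAddChar (t * (m : ZMod k))‖ ≤
      k / 2 * ((t.val : ℝ)⁻¹ + ((-t).val : ℝ)⁻¹) := by
  have hk : (0 : ℝ) < k := mod_cast NeZero.pos k
  have hval : (0 : ℝ) < t.val := mod_cast Nat.pos_of_ne_zero ((ZMod.val_ne_zero t).2 ht)
  have hlt : (t.val : ℝ) < k := mod_cast t.val_lt
  have hneg : ((-t).val : ℝ) = k - t.val := by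
    have : NeZero t := ⟨ht⟩
    rw [ZMod.val_neg_of_ne_zero, Nat.cast_sub t.val_le]
  have hgeom : ∑ m ∈ Ico a b, ZMod.stdAddChar (t * (m : ZMod k)) =
      ZMod.stdAddChar (t * (a : ZMod k)) * ∑ j ∈ range (b - a).toNat, ZMod.stdAddChar t ^ j := by
    rw [sum_Ico_int_eq_sum_range, mul_sum]
    refine sum_congr rfl fun j _ ↦ ?_
    rw [← AddChar.map_nsmul_eq_pow, ← AddChar.map_add_eq_mul, nsmul_eq_mul]
    push_cast
    ring_nf
  have hne : ZMod.stdAddChar t ≠ 1 := by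
    rw [← AddChar.map_zero_eq_one (ZMod.stdAddChar (N := k))]
    exact ZMod.injective_stdAddChar.ne ht
  have hlow : 4 * (t.val / k) * (1 - t.val / k) ≤ ‖ZMod.stdAddChar t - 1‖ := by
    have := two_mul_mul_one_sub_le_sin_pi_mul (x := t.val / k) (by positivity)
      (div_le_one_of_le₀ hlt.le hk.le)
    rw [norm_stdAddChar_sub_one]
    linarith
  have hsub : (0 : ℝ) < 1 - t.val / k := sub_pos.2 ((div_lt_one hk).2 hlt)
  calc ‖∑ m ∈ Ico a b, ZMod.stdAddChar (t * (m : ZMod k))‖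
      = ‖∑ j ∈ range (b - a).toNat, ZMod.stdAddChar t ^ j‖ := by
        rw [hgeom, norm_mul, norm_stdAddChar, one_mul]
    _ ≤ 2 / ‖ZMod.stdAddChar t - 1‖ := norm_geom_sum_le (norm_stdAddChar t) hne _
    _ ≤ 2 / (4 * (t.val / k) * (1 - t.val / k)) := by gcongr
    _ = k / 2 * ((t.val : ℝ)⁻¹ + ((-t).val : ℝ)⁻¹) := by
        have : (k - t.val : ℝ) ≠ 0 := (sub_pos.2 hlt).ne'
        rw [hneg]
        field_simp
        ring

lemma sum_inv_val_le (k : ℕ) [NeZero k] : ∑ t : ZMod k, (t.val : ℝ)⁻¹ ≤ 1 + Real.log k := by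
  obtain ⟨n, rfl⟩ := Nat.exists_eq_succ_of_ne_zero (NeZero.ne k)
  calc ∑ t : ZMod (n + 1), (t.val : ℝ)⁻¹ = ∑ i ∈ range (n + 1), (i : ℝ)⁻¹ :=
        Fin.sum_univ_eq_sum_range (fun i ↦ (i : ℝ)⁻¹) (n + 1)
    _ = harmonic n := by
        simp [sum_range_succ', harmonic]
    _ ≤ 1 + Real.log n := harmonic_le_one_add_log n
    _ ≤ 1 + Real.log (n + 1 : ℕ) := by
        rcases n.eq_zero_or_pos with rfl | hn
        · simp
        · gcongr
          simp

variable {χ : DirichletCharacter ℂ k}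

lemma apply_eq_gaussSum_mul_sum_stdAddChar (hχ : χ.IsPrimitive) (x : ZMod k) :
    χ x = (k : ℂ)⁻¹ * gaussSum χ ZMod.stdAddChar *
      ∑ t, χ⁻¹ (-t) * ZMod.stdAddChar (t * x) := by
  have h := ZMod.invDFT_apply (ZMod.dft χ) x
  rw [LinearEquiv.symm_apply_apply] at h
  rw [h, smul_eq_mul, mul_assoc]
  congr 1
  rw [mul_sum]
  refine sum_congr rfl fun t _ ↦ ?_
  rw [hχ.fourierTransform_eq_inv_mul_gaussSum, smul_eq_mul]
  ring

lemma norm_gaussSum_of_isPrimitive (hχ : χ.IsPrimitive) :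
    ‖gaussSum χ ZMod.stdAddChar‖ = √k := by
  have hstar : ∑ t : ZMod k, χ⁻¹ (-t) * ZMod.stdAddChar (t * (1 : ZMod k)) =
      star (gaussSum χ ZMod.stdAddChar) := by
    rw [star_gaussSum_eq]
    exact Fintype.sum_equiv (Equiv.neg _) _ _ fun t ↦ by simp
  have h := apply_eq_gaussSum_mul_sum_stdAddChar hχ 1
  rw [hstar, map_one, mul_assoc, Complex.star_def, Complex.mul_conj, Complex.normSq_eq_norm_sq,
    eq_comm, inv_mul_eq_one₀ (NeZero.ne _)] at h
  rw [eq_comm, Real.sqrt_eq_iff_eq_sq (by positivity) (norm_nonneg _)]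
  exact_mod_cast h

theorem norm_sum_Ico_le_of_isPrimitive (hk : k ≠ 1) (hχ : χ.IsPrimitive) (a b : ℤ) :
    ‖∑ m ∈ Ico a b, χ m‖ ≤ √k * (1 + Real.log k) := by
  have hk0 : (0 : ℝ) < k := mod_cast NeZero.pos k
  have hterm : ∀ t : ZMod k, ‖χ⁻¹ (-t) * ∑ m ∈ Ico a b, ZMod.stdAddChar (t * (m : ZMod k))‖ ≤
      k / 2 * ((t.val : ℝ)⁻¹ + ((-t).val : ℝ)⁻¹) := fun t ↦ by
    rcases eq_or_ne t 0 with rfl | ht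
    · rw [neg_zero, DirichletCharacter.map_zero' _ hk, zero_mul, norm_zero]
      positivity
    · rw [norm_mul]
      exact (mul_le_of_le_one_left (norm_nonneg _) (χ⁻¹.norm_le_one _)).trans
        (norm_sum_Ico_stdAddChar_le ht a b)
  have hneg : ∑ t : ZMod k, ((-t).val : ℝ)⁻¹ = ∑ t : ZMod k, (t.val : ℝ)⁻¹ :=
    Equiv.sum_comp (Equiv.neg (ZMod k)) fun t ↦ (t.val : ℝ)⁻¹
  have hswap : ∑ m ∈ Ico a b, χ m = (k : ℂ)⁻¹ * gaussSum χ ZMod.stdAddChar *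
      ∑ t, χ⁻¹ (-t) * ∑ m ∈ Ico a b, ZMod.stdAddChar (t * (m : ZMod k)) := by
    simp_rw [apply_eq_gaussSum_mul_sum_stdAddChar hχ (_ : ZMod k), ← mul_sum, mul_sum (Ico a b)]
    rw [← mul_sum, sum_comm]
  calc ‖∑ m ∈ Ico a b, χ m‖
      = (k : ℝ)⁻¹ * √k * ‖∑ t, χ⁻¹ (-t) * ∑ m ∈ Ico a b, ZMod.stdAddChar (t * (m : ZMod k))‖ := by
        rw [hswap, norm_mul, norm_mul, norm_inv, Complex.norm_natCast,
          norm_gaussSum_of_isPrimitive hχ]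
    _ ≤ (k : ℝ)⁻¹ * √k * ∑ t : ZMod k, k / 2 * ((t.val : ℝ)⁻¹ + ((-t).val : ℝ)⁻¹) := by
        gcongr
        exact norm_sum_le_of_le _ fun t _ ↦ hterm t
    _ = √k * ∑ t : ZMod k, (t.val : ℝ)⁻¹ := by
        rw [← mul_sum, sum_add_distrib, hneg]
        field_simp
        ring
    _ ≤ √k * (1 + Real.log k) := by
        gcongr
        exact sum_inv_val_le k

end PolyaVinogradov

section JacobiCharacter

lemma isPrimitive_of_not_factorsThrough {R : Type*} [CommMonoidWithZero R] {k : ℕ} [NeZero k]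
    {χ : DirichletCharacter R k}
    (h : ∀ p r : ℕ, p.Prime → k = p * r → ¬ χ.FactorsThrough r) : χ.IsPrimitive := by
  obtain ⟨e, he⟩ := χ.conductor_dvd_level
  rw [DirichletCharacter.isPrimitive_def]
  by_contra hne
  have he1 : e ≠ 1 := by
    rintro rfl
    exact hne (by rw [← mul_one χ.conductor, ← he])
  obtain ⟨p, hp, f, rfl⟩ := Nat.exists_prime_and_dvd he1
  have hk : k = p * (χ.conductor * f) := he.trans (mul_left_comm _ _ _)
  exact h p _ hp hk (DirichletCharacter.FactorsThrough.mono _ χ.factorsThrough_conductor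
    (dvd_mul_right _ f) (Dvd.intro_left p hk.symm))

lemma apply_natCast_eq_one_of_factorsThrough {R : Type*} [CommMonoidWithZero R] {k r x : ℕ}
    {χ : DirichletCharacter R k} (h : χ.FactorsThrough r) (hxk : x.Coprime k)
    (hxr : x ≡ 1 [MOD r]) : χ x = 1 := by
  rw [h.eq_changeLevel, ← ZMod.coe_unitOfCoprime x hxk,
    DirichletCharacter.changeLevel_eq_cast_of_dvd, ZMod.coe_unitOfCoprime,
    ZMod.cast_natCast h.dvd, (ZMod.natCast_eq_natCast_iff _ _ _).2 hxr, Nat.cast_one, map_one]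

lemma exists_modEq_one_jacobiSym_eq_neg_one {p r : ℕ} (hp : p.Prime) (hp2 : p ≠ 2) (hr : r ≠ 0)
    (hpr : p.Coprime r) : ∃ x : ℕ, x ≡ 1 [MOD r] ∧ J(x | p * r) = -1 := by
  have : Fact p.Prime := ⟨hp⟩
  obtain ⟨z, hz⟩ := FiniteField.exists_nonsquare (F := ZMod p) (by rwa [ZMod.ringChar_zmod_n])
  obtain ⟨x, hxp, hxr⟩ := Nat.chineseRemainder hpr z.val 1
  have hJp : J(x | p) = -1 := by
    refine ZMod.nonsquare_iff_jacobiSym_eq_neg_one.2 ?_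
    rwa [Int.cast_natCast, (ZMod.natCast_eq_natCast_iff _ _ _).2 hxp, ZMod.natCast_zmod_val]
  have hJr : J(x | r) = 1 := by
    rw [← jacobiSym.one_left r]
    exact jacobiSym.mod_left' (mod_cast hxr)
  exact ⟨x, hxr, by rw [jacobiSym.mul_right' _ hp.ne_zero hr, hJp, hJr, mul_one]⟩

/-- The Jacobi symbol `J(· | k)` as a Dirichlet character modulo `k`, so that the
Pólya–Vinogradov inequality applies to it. -/
noncomputable def jacobiChar (k : ℕ) [NeZero k] : DirichletCharacter ℂ k where
  toFun x := (J(x.val | k) : ℂ)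
  map_one' := by
    have : J((1 : ZMod k).val | k) = J(1 | k) :=
      jacobiSym.mod_left' (by rw [ZMod.val_one_eq_one_mod]; simp)
    rw [this, jacobiSym.one_left, Int.cast_one]
  map_mul' x y := by
    have : J((x * y).val | k) = J(x.val * y.val | k) :=
      jacobiSym.mod_left' (by rw [ZMod.val_mul]; simp)
    rw [this, jacobiSym.mul_left, Int.cast_mul]
  map_nonunit' x hx := by
    rw [Int.cast_eq_zero, jacobiSym.eq_zero_iff_not_coprime, Int.gcd_natCast_natCast]
    intro h
    exact hx (by simpa using (ZMod.isUnit_iff_coprime x.val k).2 h)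

lemma jacobiChar_intCast (k : ℕ) [NeZero k] (x : ℤ) : jacobiChar k x = (J(x | k) : ℂ) := by
  rw [jacobiSym.mod_left x, ← ZMod.val_intCast x]
  rfl

lemma isPrimitive_jacobiChar {k : ℕ} [NeZero k] (hodd : Odd k) (hsq : Squarefree k) :
    (jacobiChar k).IsPrimitive := by
  refine isPrimitive_of_not_factorsThrough fun p r hp hk hfac ↦ ?_
  have hp2 : p ≠ 2 := hodd.ne_two_of_dvd_nat (Dvd.intro r hk.symm)
  obtain ⟨x, hxr, hxJ⟩ := exists_modEq_one_jacobiSym_eq_neg_one hp hp2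
    (right_ne_zero_of_mul (hk ▸ NeZero.ne k)) (Nat.coprime_of_squarefree_mul (hk ▸ hsq))
  rw [← hk] at hxJ
  have hxk : x.Coprime k := by
    by_contra hx
    have : J(x | k) = 0 := jacobiSym.eq_zero_iff_not_coprime.2 hx
    omega
  have hone := apply_natCast_eq_one_of_factorsThrough hfac hxk hxr
  rw [← Int.cast_natCast, jacobiChar_intCast, hxJ] at hone
  norm_num at hone

lemma abs_sum_Ico_jacobiSym_le_of_squarefree {k : ℕ} (hk : k ≠ 1) (hodd : Odd k)
    (hsq : Squarefree k) (a b : ℤ) :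
    |((∑ m ∈ Ico a b, J(m | k) : ℤ) : ℝ)| ≤ √k * (1 + Real.log k) := by
  have : NeZero k := ⟨hsq.ne_zero⟩
  have h := norm_sum_Ico_le_of_isPrimitive hk (isPrimitive_jacobiChar hodd hsq) a b
  simp_rw [jacobiChar_intCast] at h
  rwa [← Int.cast_sum, Complex.norm_intCast] at h

end JacobiCharacter

section JacobiSum

lemma sum_divisors_moebius (n : ℕ) : ∑ d ∈ n.divisors, μ d = if n = 1 then 1 else 0 := by
  rw [← ArithmeticFunction.coe_mul_zeta_apply, ArithmeticFunction.moebius_mul_coe_zeta,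
    ArithmeticFunction.one_apply]

lemma sum_divisors_filter_dvd_moebius {r : ℕ} (hr : r ≠ 0) (m : ℤ) :
    ∑ g ∈ r.divisors with ((g : ℕ) : ℤ) ∣ m, μ g = if m.gcd r = 1 then 1 else 0 := by
  rw [← sum_divisors_moebius]
  congr 1
  ext g
  rw [mem_filter, Nat.mem_divisors, Nat.mem_divisors, Int.dvd_gcd_iff]
  have : m.gcd r ≠ 0 := by simp [Int.gcd_eq_zero_iff, hr]
  rw [Int.natCast_dvd_natCast]
  tauto

lemma abs_jacobiSym_le_one (m : ℤ) (n : ℕ) : |J(m | n)| ≤ 1 := by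
  rcases jacobiSym.trichotomy m n with h | h | h <;> simp [h]

lemma jacobiSym_sq_mul_right {r k : ℕ} (hr : r ≠ 0) (hk : k ≠ 0) (m : ℤ) :
    J(m | r ^ 2 * k) = ∑ g ∈ r.divisors with ((g : ℕ) : ℤ) ∣ m, μ g * J(m | k) := by
  have : NeZero r := ⟨hr⟩
  rw [jacobiSym.mul_right' _ (pow_ne_zero 2 hr) hk, jacobiSym.pow_right, ← sum_mul,
    sum_divisors_filter_dvd_moebius hr]
  split_ifs with h
  · rw [jacobiSym.sq_one h]
  · rw [jacobiSym.eq_zero_iff_not_coprime.2 h, zero_pow two_ne_zero]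

lemma abs_sum_Ico_filter_dvd_jacobiSym_le {k : ℕ} (hk : k ≠ 1) (hodd : Odd k)
    (hsq : Squarefree k) {g : ℕ} (hg : 0 < g) (a b : ℤ) :
    |((∑ m ∈ Ico a b with (g : ℤ) ∣ m, J(m | k) : ℤ) : ℝ)| ≤ √k * (1 + Real.log k) := by
  have hsum : ∑ m ∈ Ico a b with (g : ℤ) ∣ m, J(m | k) =
      J(g | k) * ∑ m ∈ Ico ⌈a / (g : ℚ)⌉ ⌈b / (g : ℚ)⌉, J(m | k) := by
    have h := Int.Ico_filter_dvd_eq a b (r := (g : ℤ)) (mod_cast hg)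
    rw [Int.cast_natCast] at h
    rw [h, sum_map, mul_sum]
    refine sum_congr rfl fun m _ ↦ ?_
    rw [Function.Embedding.coeFn_mk, jacobiSym.mul_left, mul_comm]
  rw [hsum, Int.cast_mul, abs_mul]
  refine (mul_le_of_le_one_left (abs_nonneg _) ?_).trans
    (abs_sum_Ico_jacobiSym_le_of_squarefree hk hodd hsq _ _)
  exact_mod_cast abs_jacobiSym_le_one g k

theorem abs_sum_Ico_jacobiSym_le {n : ℕ} (hodd : Odd n) (hn : ¬IsSquare n) (a b : ℤ) :
    |((∑ m ∈ Ico a b, J(m | n) : ℤ) : ℝ)| ≤ √n * (1 + Real.log n) := by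
  obtain ⟨k, r, hk, hr, rfl, hsq⟩ := Nat.sq_mul_squarefree_of_pos hodd.pos
  have hk1 : k ≠ 1 := by
    rintro rfl
    exact hn ⟨r, by ring⟩
  have hkodd : Odd k := (Nat.odd_mul.1 hodd).2
  have hterm : ∀ g ∈ r.divisors,
      |((μ g * ∑ m ∈ Ico a b with (g : ℤ) ∣ m, J(m | k) : ℤ) : ℝ)| ≤ √k * (1 + Real.log k) := by
    intro g hg
    rw [Int.cast_mul, abs_mul]
    refine (mul_le_of_le_one_left (abs_nonneg _) ?_).trans
      (abs_sum_Ico_filter_dvd_jacobiSym_le hk1 hkodd hsq (Nat.pos_of_mem_divisors hg) a b)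
    exact_mod_cast ArithmeticFunction.abs_moebius_le_one
  have hsplit : ∑ m ∈ Ico a b, J(m | r ^ 2 * k) =
      ∑ g ∈ r.divisors, μ g * ∑ m ∈ Ico a b with (g : ℤ) ∣ m, J(m | k) := by
    simp_rw [jacobiSym_sq_mul_right hr.ne' hk.ne', mul_sum, sum_filter]
    exact sum_comm
  have hrcast : (1 : ℝ) ≤ r := mod_cast hr
  calc |((∑ m ∈ Ico a b, J(m | r ^ 2 * k) : ℤ) : ℝ)|
      ≤ #r.divisors • (√k * (1 + Real.log k)) := by
        rw [hsplit, Int.cast_sum]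
        exact (abs_sum_le_sum_abs _ _).trans (sum_le_card_nsmul _ _ _ hterm)
    _ ≤ r * (√k * (1 + Real.log (r ^ 2 * k))) := by
        rw [nsmul_eq_mul]
        gcongr
        · exact Nat.card_divisors_le_self r
        · exact le_mul_of_one_le_left (by positivity) (one_le_pow₀ hrcast)
    _ = √(r ^ 2 * k : ℕ) * (1 + Real.log (r ^ 2 * k : ℕ)) := by
        push_cast
        rw [Real.sqrt_mul (by positivity), Real.sqrt_sq (by positivity), mul_assoc]

lemma abs_sum_range_jacobiSym_le {n : ℕ} (hodd : Odd n) (hn : ¬IsSquare n) {q : ℕ}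
    (hq : q.Coprime n) (b : ℤ) (K : ℕ) :
    |((∑ j ∈ range K, J(b + q * j | n) : ℤ) : ℝ)| ≤ √n * (1 + Real.log n) := by
  obtain ⟨y, hy⟩ := Int.mod_coprime hq
  have hterm : ∀ j : ℕ, J(b + q * j | n) = J(q | n) * J(y * b + j | n) := by
    intro j
    rw [← jacobiSym.mul_left]
    refine jacobiSym.mod_left' ?_
    calc b + q * j ≡ 1 * b + q * j [ZMOD n] := by rw [one_mul]
      _ ≡ q * y * b + q * j [ZMOD n] := (hy.symm.mul_right b).add_right _
      _ = q * (y * b + j) := by ring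
  have hsum : ∑ j ∈ range K, J(b + q * j | n) =
      J(q | n) * ∑ m ∈ Ico (y * b) (y * b + K), J(m | n) := by
    rw [sum_Ico_int_eq_sum_range, mul_sum, add_sub_cancel_left, Int.toNat_natCast]
    exact sum_congr rfl fun j _ ↦ hterm j
  rw [hsum, Int.cast_mul, abs_mul]
  refine (mul_le_of_le_one_left (abs_nonneg _) ?_).trans (abs_sum_Ico_jacobiSym_le hodd hn _ _)
  exact_mod_cast abs_jacobiSym_le_one q n

end JacobiSum

section BoundedVariation

lemma sum_range_abs_sub_le {α : Type*} [LinearOrder α] {g : α → ℝ} {s : Set α}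
    (hg : BoundedVariationOn g s) {u : ℕ → α} (hu : Monotone u) (hus : ∀ j, u j ∈ s) (N : ℕ) :
    ∑ j ∈ range N, |g (u (j + 1)) - g (u j)| ≤ (eVariationOn g s).toReal := by
  have h := ENNReal.toReal_mono hg (eVariationOn.sum_le (f := g) (n := N) hu hus)
  rw [ENNReal.toReal_sum fun _ _ ↦ edist_ne_top _ _] at h
  simpa only [← dist_edist, Real.dist_eq] using h

lemma abs_tsum_mul_le_of_boundedVariationOn {α : Type*} [LinearOrder α] {g : α → ℝ} {s : Set α}
    (hg : BoundedVariationOn g s) {u : ℕ → α} (hu : Monotone u) (hus : ∀ j, u j ∈ s) {N : ℕ}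
    (hzero : ∀ j ≥ N, g (u j) = 0) {f : ℕ → ℝ} {B : ℝ}
    (hf : ∀ K ≤ N, |∑ j ∈ range K, f j| ≤ B) :
    |∑' j, f j * g (u j)| ≤ B * (eVariationOn g s).toReal := by
  have hB : 0 ≤ B := (abs_nonneg _).trans (hf 0 N.zero_le)
  have hparts : ∑' j, f j * g (u j) =
      -∑ j ∈ range N, (g (u (j + 1)) - g (u j)) * ∑ i ∈ range (j + 1), f i := by
    rw [tsum_eq_sum (s := range (N + 1)) fun j hj ↦ by
      rw [hzero j (by simp only [mem_range] at hj; omega), mul_zero]]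
    have h := sum_range_by_parts (fun j ↦ g (u j)) f (N + 1)
    simp only [smul_eq_mul, Nat.add_sub_cancel, hzero N le_rfl, zero_mul, zero_sub] at h
    rw [← h]
    exact sum_congr rfl fun j _ ↦ mul_comm _ _
  rw [hparts, abs_neg]
  calc |∑ j ∈ range N, (g (u (j + 1)) - g (u j)) * ∑ i ∈ range (j + 1), f i|
      ≤ ∑ j ∈ range N, |g (u (j + 1)) - g (u j)| * B := by
        refine (abs_sum_le_sum_abs _ _).trans (sum_le_sum fun j hj ↦ ?_)
        rw [abs_mul]
        exact mul_le_mul_of_nonneg_left (hf _ (mem_range.1 hj)) (abs_nonneg _)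
    _ = B * ∑ j ∈ range N, |g (u (j + 1)) - g (u j)| := by rw [← sum_mul, mul_comm]
    _ ≤ B * (eVariationOn g s).toReal :=
        mul_le_mul_of_nonneg_left (sum_range_abs_sub_le hg hu hus N) hB

lemma abs_sum_range_le_of_abs_le_one {f : ℕ → ℝ} (hf0 : f 0 = 0) (hf : ∀ m, |f m| ≤ 1)
    {K N : ℕ} (hK : K ≤ N + 1) : |∑ m ∈ range K, f m| ≤ N := by
  obtain _ | K := K
  · simp
  rw [sum_range_succ', hf0, add_zero]
  calc |∑ m ∈ range K, f (m + 1)| ≤ #(range K) • (1 : ℝ) :=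
        (abs_sum_le_sum_abs _ _).trans (sum_le_card_nsmul _ _ _ fun m _ ↦ hf _)
    _ ≤ N := by
        rw [card_range, nsmul_one]
        exact_mod_cast Nat.le_of_succ_le_succ hK

variable {Φ : ℝ → ℝ}

lemma apply_natCast_div_eq_zero {R X : ℝ} (hX : 0 < X) (hR : ∀ x > R, Φ x = 0) {m : ℕ}
    (hm : ⌊R * X⌋₊ < m) : Φ (m / X) = 0 :=
  hR _ ((lt_div_iff₀ hX).2 (Nat.lt_of_floor_lt hm))

lemma abs_tsum_mul_apply_div_le_floor (hΦ : BoundedVariationOn Φ (Set.Ici 0)) {R X : ℝ}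
    (hX : 0 < X) (hR : ∀ x > R, Φ x = 0) {f : ℕ → ℝ} (hf0 : f 0 = 0) (hf : ∀ m, |f m| ≤ 1) :
    |∑' m : ℕ, f m * Φ (m / X)| ≤ ⌊R * X⌋₊ * (eVariationOn Φ (Set.Ici 0)).toReal := by
  refine abs_tsum_mul_le_of_boundedVariationOn hΦ (u := fun m : ℕ ↦ m / X)
    (fun i j hij ↦ by dsimp only; gcongr) (fun j ↦ ?_) (N := ⌊R * X⌋₊ + 1)
    (fun j hj ↦ apply_natCast_div_eq_zero hX hR hj)
    fun K hK ↦ abs_sum_range_le_of_abs_le_one hf0 hf hK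
  rw [Set.mem_Ici]
  positivity

lemma boundedVariationOn_Ici_of_lipschitzWith {E : Type*} [PseudoEMetricSpace E] {f : ℝ → E}
    {K : NNReal} (hf : LipschitzWith K f) {R : ℝ} {c : E} (hR : ∀ x ≥ R, f x = c) (a : ℝ) :
    BoundedVariationOn f (Set.Ici a) := by
  set b := max a R
  have hIcc : BoundedVariationOn f (Set.Icc a b) := by
    simpa using hf.locallyBoundedVariationOn (Set.Icc a b) a b (by simp [b]) (by simp [b])
  have hIci : eVariationOn f (Set.Ici b) = 0 := eVariationOn.constant_on <| by
    rintro _ ⟨x, hx, rfl⟩ _ ⟨y, hy, rfl⟩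
    rw [hR x (le_of_max_le_right hx), hR y (le_of_max_le_right hy)]
  have hunion : Set.Icc a b ∪ Set.Ici b = Set.Ici a := Set.Icc_union_Ici_eq_Ici (le_max_left _ _)
  rw [BoundedVariationOn, ← hunion,
    eVariationOn.union f (isGreatest_Icc (le_max_left a R)) isLeast_Ici, hIci, add_zero]
  exact hIcc

end BoundedVariation

section ArithmeticProgression

lemma modEq_mul_left_iff_modEq_div_gcd {q M x y : ℕ} (hq : 0 < q) :
    M * x ≡ M * y [MOD q] ↔ x ≡ y [MOD q / q.gcd M] := by
  refine ⟨Nat.ModEq.cancel_left_div_gcd hq, fun h ↦ ?_⟩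
  have hdvd : q ∣ M * (q / q.gcd M) := by
    rw [← Nat.mul_div_assoc _ (q.gcd_dvd_left M), mul_comm,
      Nat.mul_div_assoc _ (q.gcd_dvd_right M)]
    exact dvd_mul_right _ _
  exact (h.mul_left' M).of_dvd hdvd

lemma eq_empty_or_exists_range_setOf_modEq_and_dvd {q : ℕ} (hq : 0 < q) (a : ℤ) (M : ℕ) :
    {m : ℕ | m ≡ a [ZMOD q] ∧ M ∣ m} = ∅ ∨ ∃ e q' : ℕ, 0 < q' ∧ q' ∣ q ∧
      {m : ℕ | m ≡ a [ZMOD q] ∧ M ∣ m} = Set.range fun j ↦ M * (e + q' * j) := by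
  by_cases hex : ∃ l : ℕ, (M * l : ℕ) ≡ a [ZMOD q]
  swap
  · left
    rw [Set.eq_empty_iff_forall_notMem]
    rintro _ ⟨hm, l, rfl⟩
    exact hex ⟨l, hm⟩
  right
  refine ⟨Nat.find hex, q / q.gcd M, Nat.div_gcd_pos_of_pos_left M hq,
    Nat.div_dvd_of_dvd (q.gcd_dvd_left M), ?_⟩
  have hmod : ∀ l : ℕ, (M * l : ℕ) ≡ a [ZMOD q] ↔ Nat.find hex ≡ l [MOD q / q.gcd M] := by
    intro l
    rw [← modEq_mul_left_iff_modEq_div_gcd hq, ← Int.natCast_modEq_iff]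
    exact ⟨(Nat.find_spec hex).trans ∘ .symm, fun h ↦ h.symm.trans (Nat.find_spec hex)⟩
  ext m
  constructor
  · rintro ⟨hm, l, rfl⟩
    obtain ⟨j, hj⟩ := (Nat.modEq_iff_dvd' (Nat.find_min' hex hm)).1 ((hmod l).1 hm)
    exact ⟨j, by dsimp only; rw [← hj, Nat.add_sub_cancel' (Nat.find_min' hex hm)]⟩
  · rintro ⟨j, rfl⟩
    exact ⟨(hmod _).2 (by simp [Nat.ModEq]), dvd_mul_right _ _⟩

variable {Φ : ℝ → ℝ} {R X : ℝ} {n q : ℕ}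

lemma abs_tsum_jacobiSym_mul_comp_le (hΦ : BoundedVariationOn Φ (Set.Ici 0))
    (hR : ∀ x > R, Φ x = 0) (hodd : Odd n) (hn : ¬IsSquare n) (hq : q.Coprime n) (e : ℤ)
    {u : ℕ → ℝ} (hu : Monotone u) (hu0 : ∀ j, 0 ≤ u j) (hlim : Filter.Tendsto u .atTop .atTop) :
    |∑' j : ℕ, (J(e + q * j | n) : ℝ) * Φ (u j)| ≤
      √n * (1 + Real.log n) * (eVariationOn Φ (Set.Ici 0)).toReal := by
  obtain ⟨N, hN⟩ := Filter.eventually_atTop.1 (hlim.eventually_gt_atTop R)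
  refine abs_tsum_mul_le_of_boundedVariationOn hΦ hu hu0 (fun j hj ↦ hR _ (hN j hj)) fun K _ ↦ ?_
  rw [← Int.cast_sum]
  exact abs_sum_range_jacobiSym_le hodd hn hq e K

lemma abs_tsum_jacobiSym_modEq_dvd_le (hΦ : BoundedVariationOn Φ (Set.Ici 0))
    (hR : ∀ x > R, Φ x = 0) (hX : 0 < X) (hodd : Odd n) (hn : ¬IsSquare n) (hq0 : 0 < q)
    (hq : q.Coprime n) (a : ℤ) {M : ℕ} (hM : 0 < M) :
    |∑' m : ℕ, if m ≡ a [ZMOD q] ∧ M ∣ m then (J(m | n) : ℝ) * Φ (m / X) else 0| ≤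
      √n * (1 + Real.log n) * (eVariationOn Φ (Set.Ici 0)).toReal := by
  set F : ℕ → ℝ := {m : ℕ | m ≡ a [ZMOD q] ∧ M ∣ m}.indicator fun m ↦ J(m | n) * Φ (m / X)
  suffices |∑' m, F m| ≤ √n * (1 + Real.log n) * (eVariationOn Φ (Set.Ici 0)).toReal by
    simpa only [F, Set.indicator_apply, Set.mem_ofPred_eq] using this
  rcases eq_empty_or_exists_range_setOf_modEq_and_dvd hq0 a M with hS | ⟨e, q', hq', hdvd, hS⟩
  · simp only [F, hS, Set.indicator_empty, tsum_zero, abs_zero]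
    positivity
  have hstrict : StrictMono fun j ↦ M * (e + q' * j) := fun i j hij ↦ by
    dsimp only
    gcongr
  have hF : ∀ j : ℕ, F (M * (e + q' * j)) =
      J(M | n) * (J(e + q' * j | n) * Φ ((M * (e + q' * j) : ℕ) / X)) := by
    intro j
    have hmem : M * (e + q' * j) ∈ {m : ℕ | m ≡ a [ZMOD q] ∧ M ∣ m} := hS ▸ Set.mem_range_self j
    rw [show F _ = _ from Set.indicator_of_mem hmem _, Nat.cast_mul, jacobiSym.mul_left]
    push_cast
    ring
  rw [← hstrict.injective.tsum_eq (hS ▸ Set.support_indicator_subset)]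
  simp_rw [hF]
  rw [tsum_mul_left, abs_mul]
  refine (mul_le_of_le_one_left (abs_nonneg _) (mod_cast abs_jacobiSym_le_one M n)).trans
    (abs_tsum_jacobiSym_mul_comp_le hΦ hR hodd hn (hq.of_dvd_left hdvd) e
      ((Nat.mono_cast.comp hstrict.monotone).div_const hX.le) (fun j ↦ ?_) ?_)
  · exact div_nonneg (Nat.cast_nonneg _) hX.le
  · exact (tendsto_natCast_atTop_atTop.comp hstrict.tendsto_atTop).atTop_div_const hX

end ArithmeticProgression

section SquarefreeSieve

lemma sq_dvd_sq_mul_iff {α b c : ℕ} (hb : 0 < b) (hc : Squarefree c) :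
    α ^ 2 ∣ b ^ 2 * c ↔ α ∣ b := by
  refine ⟨fun h ↦ ?_, fun h ↦ (pow_dvd_pow_of_dvd h 2).mul_right c⟩
  obtain ⟨g, α', b', hg, hcop, rfl, rfl⟩ :=
    Nat.exists_coprime' (m := α) (Nat.gcd_pos_of_pos_right _ hb)
  rw [mul_pow, mul_pow, mul_right_comm] at h
  have hα' : α' ^ 2 ∣ c :=
    (hcop.pow 2 2).dvd_of_dvd_mul_left (Nat.dvd_of_mul_dvd_mul_right (pow_pos hg 2) h)
  rw [Nat.isUnit_iff.1 (hc α' (sq α' ▸ hα')), one_mul]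
  exact dvd_mul_left _ _

lemma sum_moebius_filter_sq_dvd {m N : ℕ} (hm : 0 < m) (hmN : m ≤ N) :
    ∑ α ∈ Icc 1 (Nat.sqrt N) with α ^ 2 ∣ m, μ α = if Squarefree m then 1 else 0 := by
  obtain ⟨c, b, -, hb, rfl, hc⟩ := Nat.sq_mul_squarefree_of_pos hm
  have hdivisors : {α ∈ Icc 1 (Nat.sqrt N) | α ^ 2 ∣ b ^ 2 * c} = b.divisors := by
    ext α
    simp only [mem_filter, mem_Icc, Nat.mem_divisors, sq_dvd_sq_mul_iff hb hc]
    refine ⟨fun h ↦ ⟨h.2, hb.ne'⟩, fun h ↦ ⟨⟨Nat.pos_of_dvd_of_pos h.1 hb, ?_⟩, h.1⟩⟩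
    exact Nat.le_sqrt'.2
      ((Nat.le_of_dvd hm ((sq_dvd_sq_mul_iff hb hc).2 h.1)).trans hmN)
  have hiff : b = 1 ↔ Squarefree (b ^ 2 * c) := by
    refine ⟨?_, fun h ↦ Nat.isUnit_iff.1 (h b ⟨c, by ring⟩)⟩
    rintro rfl
    simpa using hc
  simp only [hdivisors, sum_divisors_moebius, hiff]

variable {f : ℕ → ℝ} {N : ℕ}

lemma tsum_squarefree_eq_sum_moebius (hf0 : f 0 = 0) (hfN : ∀ m > N, f m = 0) :
    ∑' m, (if Squarefree m then f m else 0) =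
      ∑ α ∈ Icc 1 (Nat.sqrt N), (μ α : ℝ) * ∑' m, if α ^ 2 ∣ m then f m else 0 := by
  have hsupp : ∀ m ∉ Icc 1 N, f m = 0 := fun m hm ↦ by
    rcases m.eq_zero_or_pos with rfl | hpos
    · exact hf0
    · exact hfN m (by simpa [hpos.ne', Nat.one_le_iff_ne_zero] using hm)
  have hfinite (P : ℕ → Prop) [DecidablePred P] :
      ∑' m, (if P m then f m else 0) = ∑ m ∈ Icc 1 N, if P m then f m else 0 :=
    tsum_eq_sum fun m hm ↦ by rw [hsupp m hm, ite_self]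
  simp_rw [hfinite, mul_sum]
  rw [sum_comm]
  refine sum_congr rfl fun m hm ↦ ?_
  have hind := sum_moebius_filter_sq_dvd (mem_Icc.1 hm).1 (mem_Icc.1 hm).2
  simp_rw [mul_ite, mul_zero, ← sum_filter, ← sum_mul, ← Int.cast_sum, hind]
  split_ifs <;> simp

lemma abs_tsum_squarefree_le (hf0 : f 0 = 0) (hfN : ∀ m > N, f m = 0) {B : ℝ}
    (hB : ∀ α > 0, |∑' m, if α ^ 2 ∣ m then f m else 0| ≤ B) :
    |∑' m, if Squarefree m then f m else 0| ≤ √N * B := by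
  have hB0 : 0 ≤ B := (abs_nonneg _).trans (hB 1 one_pos)
  rw [tsum_squarefree_eq_sum_moebius hf0 hfN]
  calc |∑ α ∈ Icc 1 (Nat.sqrt N), (μ α : ℝ) * ∑' m, if α ^ 2 ∣ m then f m else 0|
      ≤ #(Icc 1 (Nat.sqrt N)) • B := by
        refine (abs_sum_le_sum_abs _ _).trans (sum_le_card_nsmul _ _ _ fun α hα ↦ ?_)
        rw [abs_mul]
        refine (mul_le_of_le_one_left (abs_nonneg _) ?_).trans (hB α (mem_Icc.1 hα).1)
        exact_mod_cast ArithmeticFunction.abs_moebius_le_one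
    _ = Nat.sqrt N * B := by rw [Nat.card_Icc, Nat.add_sub_cancel, nsmul_eq_mul]
    _ ≤ √N * B := by
        gcongr
        exact Real.nat_sqrt_le_real_sqrt

end SquarefreeSieve

section SquarefreeJacobiSum

variable {Φ : ℝ → ℝ} {R X : ℝ} {n q : ℕ}

lemma abs_tsum_squarefree_jacobiSym_le_sqrt (hΦ : BoundedVariationOn Φ (Set.Ici 0))
    (hR : ∀ x > R, Φ x = 0) (hX : 0 < X) (hodd : Odd n) (hn : ¬IsSquare n) (hq0 : 0 < q)
    (hq : q.Coprime n) (a : ℤ) {v : ℕ} (hv : 0 < v) :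
    |∑' m : ℕ, if Squarefree m ∧ m ≡ a [ZMOD q] ∧ v ∣ m then
        (J(m | n) : ℝ) * Φ (m / X) else 0| ≤
      √⌊R * X⌋₊ * (√n * (1 + Real.log n) * (eVariationOn Φ (Set.Ici 0)).toReal) := by
  have hn1 : 1 < n := by
    have : n ≠ 1 := fun h ↦ hn (h ▸ IsSquare.one)
    have := hodd.pos
    omega
  simp_rw [ite_and (Squarefree _)]
  refine abs_tsum_squarefree_le (by simp [jacobiSym.zero_left hn1]) (fun m hm ↦ ?_) fun α hα ↦ ?_
  · rw [apply_natCast_div_eq_zero hX hR hm, mul_zero, ite_self]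
  · have h := abs_tsum_jacobiSym_modEq_dvd_le hΦ hR hX hodd hn hq0 hq a
      (Nat.lcm_pos hv (pow_pos hα 2))
    simp_rw [Nat.lcm_dvd_iff, ← and_assoc] at h
    simp_rw [← ite_and, and_comm (a := α ^ 2 ∣ _)]
    exact h

lemma abs_tsum_squarefree_jacobiSym_le_floor (hΦ : BoundedVariationOn Φ (Set.Ici 0))
    (hR : ∀ x > R, Φ x = 0) (hX : 0 < X) (a : ℤ) (v : ℕ) :
    |∑' m : ℕ, if Squarefree m ∧ m ≡ a [ZMOD q] ∧ v ∣ m then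
        (J(m | n) : ℝ) * Φ (m / X) else 0| ≤
      ⌊R * X⌋₊ * (eVariationOn Φ (Set.Ici 0)).toReal := by
  have h := abs_tsum_mul_apply_div_le_floor hΦ hX hR (f := fun m : ℕ ↦
    if Squarefree m ∧ m ≡ a [ZMOD q] ∧ v ∣ m then (J(m | n) : ℝ) else 0) (by simp) fun m ↦ by
      split_ifs
      · exact_mod_cast abs_jacobiSym_le_one m n
      · simp
  simpa only [ite_mul, zero_mul] using h

lemma sqrt_mul_one_add_log_le_rpow {ε Y : ℝ} (hε : 0 < ε) (hX : 1 ≤ X) (hY : 0 ≤ Y)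
    (hYX : Y ≤ X) :
    √X * (1 + Real.log Y) ≤ (1 + 1 / ε) * X ^ (1 / 2 + ε) := by
  have hlog : Real.log Y ≤ X ^ ε / ε :=
    (Real.log_le_rpow_div hY hε).trans (by gcongr)
  have hone : 1 ≤ X ^ ε := Real.one_le_rpow hX hε.le
  rw [Real.rpow_add (one_pos.trans_le hX), ← Real.sqrt_eq_rpow]
  calc √X * (1 + Real.log Y) ≤ √X * (X ^ ε + X ^ ε / ε) := by gcongr
    _ = (1 + 1 / ε) * (√X * X ^ ε) := by ring

lemma le_rpow_mul_sqrt {ε Y : ℝ} (hε : 0 ≤ ε) (hX : 1 ≤ X) (hXY : X ≤ Y) :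
    X ≤ X ^ (1 / 2 + ε) * √Y := by
  calc X = X ^ (1 / 2 : ℝ) * √X := by
        rw [← Real.sqrt_eq_rpow, Real.mul_self_sqrt (zero_le_one.trans hX)]
    _ ≤ X ^ (1 / 2 + ε) * √Y := by
        gcongr
        exact le_add_of_nonneg_right hε

lemma abs_tsum_squarefree_jacobiSym_le_rpow {ε : ℝ} (hε : 0 < ε)
    (hΦ : BoundedVariationOn Φ (Set.Ici 0)) (hR0 : 0 ≤ R) (hR : ∀ x > R, Φ x = 0) (hX : 1 ≤ X)
    (hodd : Odd n) (hn : ¬IsSquare n) (hq : q.Coprime n) (a : ℤ) {v : ℕ} (hv : 0 < v) :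
    |∑' m : ℕ, if Squarefree m ∧ m ≡ a [ZMOD q] ∧ v ∣ m then
        (J(m | n) : ℝ) * Φ (m / X) else 0| ≤
      (√R * (1 + 1 / ε) + R) * (eVariationOn Φ (Set.Ici 0)).toReal *
        X ^ (1 / 2 + ε) * √n := by
  set V := (eVariationOn Φ (Set.Ici 0)).toReal
  have hX0 : 0 < X := one_pos.trans_le hX
  have hfloor : (⌊R * X⌋₊ : ℝ) ≤ R * X := Nat.floor_le (by positivity)
  rcases le_total (n : ℝ) X with hnX | hXn
  · have hq0 : 0 < q := Nat.pos_of_ne_zero fun h ↦ by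
      rw [h, Nat.coprime_zero_left] at hq
      exact hn (hq ▸ IsSquare.one)
    calc _ ≤ √⌊R * X⌋₊ * (√n * (1 + Real.log n) * V) :=
          abs_tsum_squarefree_jacobiSym_le_sqrt hΦ hR hX0 hodd hn hq0 hq a hv
      _ ≤ √(R * X) * (√n * (1 + Real.log n) * V) := by gcongr
      _ = √R * V * √n * (√X * (1 + Real.log n)) := by
          rw [Real.sqrt_mul hR0]
          ring
      _ ≤ √R * V * √n * ((1 + 1 / ε) * X ^ (1 / 2 + ε)) :=
          mul_le_mul_of_nonneg_left
            (sqrt_mul_one_add_log_le_rpow hε hX n.cast_nonneg hnX) (by positivity)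
      _ = √R * (1 + 1 / ε) * V * X ^ (1 / 2 + ε) * √n := by ring
      _ ≤ (√R * (1 + 1 / ε) + R) * V * X ^ (1 / 2 + ε) * √n := by
          gcongr
          exact le_add_of_nonneg_right hR0
  · calc _ ≤ ⌊R * X⌋₊ * V := abs_tsum_squarefree_jacobiSym_le_floor hΦ hR hX0 a v
      _ ≤ R * X * V := by gcongr
      _ ≤ R * (X ^ (1 / 2 + ε) * √n) * V := by
          gcongr
          exact le_rpow_mul_sqrt hε.le hX hXn
      _ = R * V * X ^ (1 / 2 + ε) * √n := by ring
      _ ≤ (√R * (1 + 1 / ε) + R) * V * X ^ (1 / 2 + ε) * √n := by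
          gcongr
          exact le_add_of_nonneg_left (by positivity)

lemma tsum_int_squarefree_jacobiSym_eq {κ : ℤ} (hκ : κ = 1 ∨ κ = -1) (a : ℤ) (v : ℕ) :
    ∑' d : ℤ, (if Squarefree d ∧ 0 < κ * d ∧ d ≡ a [ZMOD q] ∧ (v : ℤ) ∣ d then
        (J(d | n) : ℝ) * Φ (κ * d / X) else 0) =
      J(κ | n) * ∑' m : ℕ, if Squarefree m ∧ m ≡ κ * a [ZMOD q] ∧ v ∣ m then
        (J(m | n) : ℝ) * Φ (m / X) else 0 := by
  have hκκ : κ * κ = 1 := by rcases hκ with rfl | rfl <;> rfl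
  have hunit : IsUnit κ := Int.isUnit_iff.2 hκ
  have hinj : Function.Injective fun m : ℕ ↦ κ * m :=
    (mul_right_injective₀ hunit.ne_zero).comp Nat.cast_injective
  rw [← hinj.tsum_eq, ← tsum_mul_left]
  · refine tsum_congr fun m ↦ ?_
    have hsq : Squarefree (κ * m) ↔ Squarefree m := by
      rw [← Int.squarefree_natCast, (associated_unit_mul_left (m : ℤ) κ hunit).squarefree_iff]
    have hmod : κ * m ≡ a [ZMOD q] ↔ m ≡ κ * a [ZMOD q] := by
      constructor <;> intro h <;> simpa [← mul_assoc, hκκ] using h.mul_left κ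
    have hcond : (Squarefree (κ * m) ∧ 0 < κ * (κ * m) ∧ κ * m ≡ a [ZMOD q] ∧ (v : ℤ) ∣ κ * m) ↔
        Squarefree m ∧ m ≡ κ * a [ZMOD q] ∧ v ∣ m := by
      have hpos : Squarefree m → 0 < m := fun h ↦ Nat.pos_of_ne_zero h.ne_zero
      rw [← mul_assoc, hκκ, one_mul, hsq, hmod, hunit.dvd_mul_left, Int.natCast_dvd_natCast,
        Nat.cast_pos]
      tauto
    have hcast : (κ : ℝ) * (κ * m : ℤ) = m := by
      rw [← Int.cast_mul, ← mul_assoc, hκκ, one_mul, Int.cast_natCast]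
    rw [mul_ite, mul_zero]
    exact if_congr hcond (by rw [hcast, jacobiSym.mul_left, Int.cast_mul, mul_assoc]) rfl
  · intro d hd
    have h : 0 < κ * d := by
      by_contra h
      exact hd (if_neg fun h' ↦ h h'.2.1)
    refine ⟨(κ * d).toNat, ?_⟩
    dsimp only
    rw [Int.toNat_of_nonneg h.le, ← mul_assoc, hκκ, one_mul]

end SquarefreeJacobiSum

theorem prop_dirichlet_poly_nonsquare_general {ε : ℝ} (hε : 0 < ε) {Φ : ℝ → ℝ}
    (hΦ : BoundedVariationOn Φ (Set.Ici 0)) (hsupp : BddAbove (Function.support Φ)) :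
    ∃ C > 0, ∀ (N₀ : ℕ) (a κ : ℤ), (κ = 1 ∨ κ = -1) → ∀ X : ℝ, 1 ≤ X → ∀ n v : ℕ,
      Odd n → 0 < v → n.Coprime N₀ → ¬IsSquare n →
      |(∑' d : ℤ, if Squarefree d ∧ 0 < κ * d ∧ d ≡ a [ZMOD N₀] ∧ (v : ℤ) ∣ d then
            (jacobiSym d n : ℝ) * Φ (κ * d / X) else 0)| ≤
        C * X ^ ((1 : ℝ) / 2 + ε) * √n := by
  obtain ⟨R₀, hR₀⟩ := hsupp
  set R := max R₀ 0
  have hR : ∀ x > R, Φ x = 0 := fun x hx ↦ by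
    by_contra h
    exact ((le_max_left _ _).trans_lt hx).not_ge (hR₀ h)
  have hR0 : 0 ≤ R := le_max_right _ _
  set C := (√R * (1 + 1 / ε) + R) * (eVariationOn Φ (Set.Ici 0)).toReal
  refine ⟨C + 1, by positivity, fun N₀ a κ hκ X hX n v hodd hv hcop hn ↦ ?_⟩
  rw [tsum_int_squarefree_jacobiSym_eq hκ, abs_mul]
  calc _ ≤ _ := mul_le_of_le_one_left (abs_nonneg _) (mod_cast abs_jacobiSym_le_one κ n)
    _ ≤ C * X ^ (1 / 2 + ε) * √n :=
        abs_tsum_squarefree_jacobiSym_le_rpow hε hΦ hR0 hR hX hodd hn hcop.symm _ hv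
    _ ≤ (C + 1) * X ^ (1 / 2 + ε) * √n := by
        gcongr
        exact le_add_of_nonneg_right zero_le_one

/-- Proposition 1 of Radziwiłł–Soundararajan (case `n` not a perfect square):
the bound `O(X^{1/2+ε} √n)` for `∑_{d ∈ 𝓔(κ,a), v ∣ d} (d|n) Φ(κd/X)`. -/
theorem prop_dirichlet_poly_nonsquare (N₀ : ℕ) (hN₀ : 0 < N₀) (h8 : (8 : ℕ) ∣ N₀)
    (a : ℤ) (ha : a ≡ 1 [ZMOD 4]) (haN : Int.gcd a (N₀ : ℤ) = 1)
    (κ : ℤ) (hκ : κ = 1 ∨ κ = -1) (ε : ℝ) (hε0 : 0 < ε) (hε : ε < 1 / 2)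
    (Φ : ℝ → ℝ) (hΦsmooth : ContDiff ℝ (⊤ : ℕ∞) Φ) (hΦnonneg : ∀ x, 0 ≤ Φ x)
    (hΦsupp : Function.support Φ ⊆ Set.Icc (1 / 2) (5 / 2)) :
    ∃ C > 0, ∀ X : ℝ, 2 ≤ X → ∀ n v : ℕ, 0 < n → 0 < v →
      Nat.gcd (n * v) N₀ = 1 → Squarefree v → Nat.gcd n v = 1 →
      (v : ℝ) * Real.sqrt n ≤ X ^ ((1 : ℝ) / 2 - ε) → ¬ IsSquare n →
      |(∑' d : ℤ,
          if Squarefree d ∧ 0 < κ * d ∧ d ≡ a [ZMOD N₀] ∧ (v : ℤ) ∣ d then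
            (jacobiSym d n : ℝ) * Φ (κ * d / X) else 0)| ≤
        C * X ^ ((1 : ℝ) / 2 + ε) * Real.sqrt n := by
  have hcompact : HasCompactSupport Φ :=
    HasCompactSupport.of_support_subset_isCompact isCompact_Icc hΦsupp
  obtain ⟨K, hK⟩ : ∃ K, LipschitzWith K Φ :=
    ContDiff.lipschitzWith_of_hasCompactSupport hcompact hΦsmooth (by simp)
  have hzero : ∀ x ≥ 3, Φ x = 0 := fun x hx ↦ by
    by_contra h
    linarith [(hΦsupp h).2]
  obtain ⟨C, hC, hbound⟩ := prop_dirichlet_poly_nonsquare_general hε0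
    (boundedVariationOn_Ici_of_lipschitzWith hK hzero 0) (bddAbove_Icc.mono hΦsupp)
  refine ⟨C, hC, fun X hX n v _ hv hgcd _ _ _ hsq ↦ ?_⟩
  have hcop : n.Coprime N₀ := Nat.Coprime.coprime_mul_right hgcd
  have hodd : Odd n :=
    Nat.coprime_two_left.1 (hcop.coprime_dvd_right ((by norm_num : 2 ∣ 8).trans h8)).symm
  exact hbound N₀ a κ hκ X (by linarith) n v hodd hv hcop hsq
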